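/- Let (Ω, F, P) be a probability space with a discrete-time filtration (F_i)_{i∈ℕ}, let k ≥ 1 and N ≥ 1 be integers, let I ⊆ {1, …, N}, and let (v_i)_{i∈I} be real square-integrable random variables such that, for each i ∈ I, v_i is F_{i+k}-measurable and E( v_i | F_i ) = 0 almost surely. Then E( ( Σ_{i∈I} v_i )² ) ≤ 2k · Σ_{i∈I} E( v_i² ). -/

import Mathlib

open MeasureTheory

/-- Second-moment bound for sums of `k`-dependent martingale-difference-type blocks:
if each `v_i` is square-integrable, `F_{i+k}`-measurable, and `E(v_i | F_i) = 0`, then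
`E( (Σ_{i∈I} v_i)² ) ≤ 2k Σ_{i∈I} E(v_i²)`. -/
theorem stmt16 {Ω : Type*} {m0 : MeasurableSpace Ω} (μ : Measure Ω) [IsProbabilityMeasure μ]
    (F : Filtration ℕ m0) (k N : ℕ) (hk : 1 ≤ k) (hN : 1 ≤ N)
    (I : Finset ℕ) (hI : I ⊆ Finset.Icc 1 N)
    (v : ℕ → Ω → ℝ)
    (hmeas : ∀ i ∈ I, StronglyMeasurable[F (i + k)] (v i))
    (hL2 : ∀ i ∈ I, MemLp (v i) 2 μ)
    (hcond : ∀ i ∈ I, μ[v i | F i] =ᵐ[μ] 0) :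
    ∫ ω, (∑ i ∈ I, v i ω) ^ 2 ∂μ ≤ 2 * k * ∑ i ∈ I, ∫ ω, (v i ω) ^ 2 ∂μ := by
  have hint : ∀ i ∈ I, ∀ j ∈ I, Integrable (fun ω => v i ω * v j ω) μ := fun i hi j hj =>
    (hL2 i hi).integrable_mul (hL2 j hj)
  have hsq : ∀ i ∈ I, Integrable (fun ω => (v i ω) ^ 2) μ := fun i hi => (hL2 i hi).integrable_sq
  -- far cross terms vanish
  have hfar : ∀ i ∈ I, ∀ j ∈ I, i + k ≤ j → ∫ ω, v i ω * v j ω ∂μ = 0 := by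
    intro i hi j hj hij
    have h1 : StronglyMeasurable[F j] (v i) := (hmeas i hi).mono (F.mono hij)
    have h2 := condExp_mul_of_stronglyMeasurable_left (μ := μ) (g := v j) h1 (hint i hi j hj)
      ((hL2 j hj).integrable (by norm_num))
    have h3 : μ[v i * v j | F j] =ᵐ[μ] 0 := by
      filter_upwards [h2, hcond j hj] with ω a b
      rw [a, Pi.mul_apply, b]; simp
    have h4 := integral_condExp (μ := μ) (f := v i * v j) (F.le j)
    rw [integral_congr_ae h3] at h4
    simpa using h4.symm
  set a : ℕ → ℝ := fun i => ∫ ω, (v i ω) ^ 2 ∂μ with ha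
  have ha0 : ∀ i, 0 ≤ a i := fun i => integral_nonneg fun ω => sq_nonneg _
  have hterm : ∀ i ∈ I, ∀ j ∈ I, ∫ ω, v i ω * v j ω ∂μ ≤
      (if j < i + k ∧ i < j + k then a i / 2 else 0)
        + (if j < i + k ∧ i < j + k then a j / 2 else 0) := by
    intro i hi j hj
    by_cases h : j < i + k ∧ i < j + k
    · rw [if_pos h, if_pos h, ← add_div, ha]
      simp only
      rw [← integral_add (hsq i hi) (hsq j hj), ← integral_div]
      refine integral_mono (hint i hi j hj) (((hsq i hi).add (hsq j hj)).div_const 2) ?_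
      intro ω
      simp only [Pi.add_apply]
      nlinarith [sq_nonneg (v i ω - v j ω)]
    · rw [if_neg h, if_neg h, add_zero]
      rcases le_or_gt (i + k) j with h' | h'
      · exact (hfar i hi j hj h').le
      · have := hfar j hj i hi (by omega)
        simp only [mul_comm] at this ⊢
        exact this.le
  have hcount : ∀ i ∈ I, ∑ j ∈ I, (if j < i + k ∧ i < j + k then a i / 2 else 0) ≤ k * a i := by
    intro i _
    rw [← Finset.sum_filter, Finset.sum_const, nsmul_eq_mul]
    have hc : (I.filter fun j => j < i + k ∧ i < j + k).card ≤ 2 * k := by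
      calc _ ≤ (Finset.Ico (i + 1 - k) (i + k)).card := by
            apply Finset.card_le_card
            intro j hj
            simp only [Finset.mem_filter, Finset.mem_Ico] at hj ⊢
            omega
        _ ≤ 2 * k := by rw [Nat.card_Ico]; omega
    have hc' : ((I.filter fun j => j < i + k ∧ i < j + k).card : ℝ) ≤ 2 * k := by exact_mod_cast hc
    nlinarith [mul_le_mul_of_nonneg_right hc' (ha0 i)]
  have hexp : ∫ ω, (∑ i ∈ I, v i ω) ^ 2 ∂μ = ∑ i ∈ I, ∑ j ∈ I, ∫ ω, v i ω * v j ω ∂μ := by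
    simp only [sq, Finset.sum_mul_sum]
    rw [integral_finsetSum _ fun i hi => integrable_finsetSum _ fun j hj => hint i hi j hj]
    exact Finset.sum_congr rfl fun i hi => integral_finsetSum _ fun j hj => hint i hi j hj
  rw [hexp]
  have hfirst : ∑ i ∈ I, ∑ j ∈ I, (if j < i + k ∧ i < j + k then a i / 2 else 0)
      ≤ k * ∑ i ∈ I, a i := by
    rw [Finset.mul_sum]; exact Finset.sum_le_sum hcount
  have hsecond : ∑ i ∈ I, ∑ j ∈ I, (if j < i + k ∧ i < j + k then a j / 2 else 0)
      ≤ k * ∑ i ∈ I, a i := by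
    rw [Finset.sum_comm]
    simpa only [and_comm] using hfirst
  have hle := Finset.sum_le_sum fun i hi => Finset.sum_le_sum fun j hj => hterm i hi j hj
  simp only [Finset.sum_add_distrib] at hle
  linarith
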